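/- arXiv:2103.12042 — 6 statements merged into one kernel-verified Lean document; each statement's English description precedes it below -/
import Mathlib

section
/- Non-negativity of the entropy production (Spohn's inequality) for a GKLS generator: if σ is a positive-definite Hermitian n×n matrix with L(σ) = 0, then for every positive-definite Hermitian n×n matrix ρ with Tr ρ = 1, the entropy production −Re Tr( L(ρ) · ( log ρ − log σ ) ) is nonnegative, where log denotes the matrix logarithm of a positive-definite Hermitian matrix obtained by applying the real logarithm through the continuous functional calculus. -/
open scoped Matrix ComplexOrder

section Aux

variable {n : ℕ}

theorem sp_dual (V ρ X : Matrix (Fin n) (Fin n) ℂ) :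
    Matrix.trace ((V * ρ * Vᴴ - (1 / 2 : ℂ) • (Vᴴ * V * ρ + ρ * (Vᴴ * V))) * X) =
    Matrix.trace (ρ * (Vᴴ * X * V - (1 / 2 : ℂ) • (Vᴴ * V * X + X * (Vᴴ * V)))) := by
  have h1 : Matrix.trace (V * ρ * Vᴴ * X) = Matrix.trace (ρ * (Vᴴ * X * V)) := by
    rw [show V * ρ * Vᴴ * X = V * (ρ * Vᴴ * X) by simp only [mul_assoc], Matrix.trace_mul_comm]
    simp only [mul_assoc]
  have h2 : Matrix.trace (Vᴴ * V * ρ * X) = Matrix.trace (ρ * (X * (Vᴴ * V))) := by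
    rw [mul_assoc (Vᴴ * V), Matrix.trace_mul_comm]
    simp only [mul_assoc]
  simp only [sub_mul, mul_sub, Matrix.smul_mul, Matrix.mul_smul, add_mul, mul_add,
    Matrix.trace_sub, Matrix.trace_smul, Matrix.trace_add, mul_assoc]
  simp only [mul_assoc] at h1 h2
  rw [h1, h2]; ring_nf

theorem sp_dualH (H ρ X : Matrix (Fin n) (Fin n) ℂ) :
    Matrix.trace (((-Complex.I) • (H * ρ - ρ * H)) * X) =
    Matrix.trace (ρ * ((Complex.I) • (H * X - X * H))) := by
  have h2 : Matrix.trace (H * ρ * X) = Matrix.trace (ρ * (X * H)) := by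
    rw [mul_assoc H, Matrix.trace_mul_comm]
    simp only [mul_assoc]
  simp only [sub_mul, mul_sub, Matrix.smul_mul, Matrix.mul_smul, 
    Matrix.trace_sub, Matrix.trace_smul, mul_assoc, smul_eq_mul]
  simp only [mul_assoc] at  h2
  rw [h2]; ring_nf

/-- the dual generator -/
noncomputable def spDual {κ : Type*} [Fintype κ] (H : Matrix (Fin n) (Fin n) ℂ)
    (V : κ → Matrix (Fin n) (Fin n) ℂ) (X : Matrix (Fin n) (Fin n) ℂ) :
    Matrix (Fin n) (Fin n) ℂ :=
  (Complex.I) • (H * X - X * H) +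
   ∑ k : κ, ((V k)ᴴ * X * V k - (1 / 2 : ℂ) • ((V k)ᴴ * V k * X + X * ((V k)ᴴ * V k)))

theorem sp_duality {κ : Type*} [Fintype κ] (H : Matrix (Fin n) (Fin n) ℂ)
    (V : κ → Matrix (Fin n) (Fin n) ℂ) (ρ X : Matrix (Fin n) (Fin n) ℂ) :
    Matrix.trace (((-Complex.I) • (H * ρ - ρ * H) +
      ∑ k : κ, (V k * ρ * (V k)ᴴ -
        (1 / 2 : ℂ) • ((V k)ᴴ * V k * ρ + ρ * ((V k)ᴴ * V k)))) * X) =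
    Matrix.trace (ρ * spDual H V X) := by
  unfold spDual
  rw [add_mul, mul_add, Matrix.trace_add, Matrix.trace_add, sp_dualH, Finset.sum_mul,
    Finset.mul_sum, Matrix.trace_sum, Matrix.trace_sum]
  congr 1
  exact Finset.sum_congr rfl fun k _ => sp_dual _ _ _

theorem sp_leib1 (W V A B : Matrix (Fin n) (Fin n) ℂ) :
    W * (A * B) * V - (1 / 2 : ℂ) • (W * V * (A * B) + A * B * (W * V)) =
    (W * A * V - (1 / 2 : ℂ) • (W * V * A + A * (W * V))) * B +
    A * (W * B * V - (1 / 2 : ℂ) • (W * V * B + B * (W * V))) +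
    (W * A - A * W) * (B * V - V * B) := by
  have : A * (W * V) * B = (1/2 : ℂ) • (A * (W * V) * B) + (1/2 : ℂ) • (A * (W * V) * B) := by
    rw [← add_smul]; norm_num
  simp only [sub_mul, mul_sub, Matrix.smul_mul, Matrix.mul_smul, add_mul, mul_add, smul_add, mul_assoc] at this ⊢
  module

theorem sp_leib {κ : Type*} [Fintype κ] (H : Matrix (Fin n) (Fin n) ℂ)
    (V : κ → Matrix (Fin n) (Fin n) ℂ) (A B : Matrix (Fin n) (Fin n) ℂ) :
    spDual H V (A * B) = spDual H V A * B + A * spDual H V B +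
      ∑ k, ((V k)ᴴ * A - A * (V k)ᴴ) * (B * V k - V k * B) := by
  unfold spDual
  have hH : Complex.I • (H * (A * B) - A * B * H) = (Complex.I • (H * A - A * H)) * B
      + A * (Complex.I • (H * B - B * H)) := by
    simp only [sub_mul, mul_sub, Matrix.smul_mul, Matrix.mul_smul, mul_assoc]
    module
  rw [Finset.sum_congr rfl fun k _ => sp_leib1 (V k)ᴴ (V k) A B, Finset.sum_add_distrib,
    Finset.sum_add_distrib, ← Finset.sum_mul, ← Finset.mul_sum, hH, add_mul, mul_add]
  abel

theorem sp_pos (ρ K : Matrix (Fin n) (Fin n) ℂ) (hρ : ρ.PosSemidef) :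
    0 ≤ (Matrix.trace (ρ * (Kᴴ * K))).re := by
  have h := (hρ.mul_mul_conjTranspose_same K).trace_nonneg
  have e : Matrix.trace (ρ * (Kᴴ * K)) = Matrix.trace (K * ρ * Kᴴ) := by
    rw [← mul_assoc, Matrix.trace_mul_comm, mul_assoc]
  rw [e]
  exact (Complex.le_def.mp h).1

theorem sp_diss {κ : Type*} [Fintype κ] (H : Matrix (Fin n) (Fin n) ℂ)
    (V : κ → Matrix (Fin n) (Fin n) ℂ)
    (L : Matrix (Fin n) (Fin n) ℂ → Matrix (Fin n) (Fin n) ℂ)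
    (hL : ∀ ρ, L ρ = (-Complex.I) • (H * ρ - ρ * H) +
      ∑ k : κ, (V k * ρ * (V k)ᴴ -
        (1 / 2 : ℂ) • ((V k)ᴴ * V k * ρ + ρ * ((V k)ᴴ * V k))))
    (σ ρ : Matrix (Fin n) (Fin n) ℂ) (hσ : σ.PosSemidef) (hρ : ρ.PosSemidef)
    (hσstat : L σ = 0) (s : ℝ) (hs : 0 ≤ s) (Y : Matrix (Fin n) (Fin n) ℂ)
    (hY : σ * Y + (s : ℂ) • (Y * ρ) = ρ) :
    (Matrix.trace (L ρ * Y) + Matrix.trace (L ρ * Yᴴ)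
      - s * Matrix.trace (L ρ * (Yᴴ * Y))).re ≤ 0 := by
  have hd : ∀ ρ X, Matrix.trace (L ρ * X) = Matrix.trace (ρ * spDual H V X) := by
    intro ρ X
    rw [hL, sp_duality]
  have h0 : Matrix.trace (σ * spDual H V (Y * Yᴴ)) = 0 := by
    rw [← hd, hσstat]; simp
  have hP : ∑ k, ((V k)ᴴ * Yᴴ - Yᴴ * (V k)ᴴ) * (Y * V k - V k * Y) =
      ∑ k, (Y * V k - V k * Y)ᴴ * (Y * V k - V k * Y) := by
    simp [Matrix.conjTranspose_sub, Matrix.conjTranspose_mul]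
  have hQ : ∑ k, ((V k)ᴴ * Y - Y * (V k)ᴴ) * (Yᴴ * V k - V k * Yᴴ) =
      ∑ k, (Yᴴ * V k - V k * Yᴴ)ᴴ * (Yᴴ * V k - V k * Yᴴ) := by
    simp [Matrix.conjTranspose_sub, Matrix.conjTranspose_mul]
  have hP0 : 0 ≤ (Matrix.trace (ρ * ∑ k, (Y * V k - V k * Y)ᴴ * (Y * V k - V k * Y))).re := by
    rw [Finset.mul_sum, Matrix.trace_sum, Complex.re_sum]
    exact Finset.sum_nonneg fun k _ => sp_pos _ _ hρ
  have hQ0 : 0 ≤ (Matrix.trace (σ * ∑ k, (Yᴴ * V k - V k * Yᴴ)ᴴ *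
      (Yᴴ * V k - V k * Yᴴ))).re := by
    rw [Finset.mul_sum, Matrix.trace_sum, Complex.re_sum]
    exact Finset.sum_nonneg fun k _ => sp_pos _ _ hσ
  have hY' : Yᴴ * σ + (s : ℂ) • (ρ * Yᴴ) = ρ := by
    have := congrArg Matrix.conjTranspose hY
    simpa [Matrix.conjTranspose_add, Matrix.conjTranspose_mul, Matrix.conjTranspose_smul,
      hσ.1.eq, hρ.1.eq] using this
  rw [hd, hd, hd, sp_leib, hP]
  rw [sp_leib, hQ] at h0
  generalize spDual H V Y = A at *
  generalize spDual H V Yᴴ = B at *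
  generalize (∑ k, (Y * V k - V k * Y)ᴴ * (Y * V k - V k * Y)) = P at *
  generalize (∑ k, (Yᴴ * V k - V k * Yᴴ)ᴴ * (Yᴴ * V k - V k * Yᴴ)) = Q at *
  have e1 : Matrix.trace (ρ * A) =
      Matrix.trace (σ * (A * Yᴴ)) + s * Matrix.trace (ρ * (Yᴴ * A)) := by
    conv_lhs => rw [← hY']
    rw [add_mul, Matrix.trace_add, Matrix.smul_mul, Matrix.trace_smul, smul_eq_mul, mul_assoc ρ,
      mul_assoc Yᴴ, Matrix.trace_mul_comm Yᴴ, mul_assoc]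
  have e2 : Matrix.trace (ρ * B) =
      Matrix.trace (σ * (Y * B)) + s * Matrix.trace (ρ * (B * Y)) := by
    conv_lhs => rw [← hY]
    rw [add_mul, Matrix.trace_add, Matrix.smul_mul, Matrix.trace_smul, smul_eq_mul, mul_assoc σ,
      mul_assoc Y, Matrix.trace_mul_comm Y, mul_assoc]
  have e : Matrix.trace (ρ * A) + Matrix.trace (ρ * B)
      - s * Matrix.trace (ρ * (B * Y + Yᴴ * A + P)) =
      -(Matrix.trace (σ * Q)) - s * Matrix.trace (ρ * P) := by
    simp only [mul_add, Matrix.trace_add] at h0 ⊢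
    rw [e1, e2]
    linear_combination h0
  rw [e]
  simp only [Complex.sub_re, Complex.neg_re, Complex.re_ofReal_mul]
  nlinarith [mul_nonneg hs hP0]

/-- scalar antiderivative -/
noncomputable def spPhi (p r q s : ℝ) : ℝ :=
  if p = r then Real.log (q + s * p) + s * p / (q + s * p)
  else (r * Real.log (q + s * r) - p * Real.log (q + s * p)) / (r - p)

noncomputable def spC (p r : ℝ) : ℝ :=
  if p = r then Real.log p + 1
  else (r * Real.log r - p * Real.log p) / (r - p)

theorem spPhi_zero (p r q : ℝ) : spPhi p r q 0 = Real.log q := by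
  unfold spPhi
  split_ifs with h
  · simp
  · have : r - p ≠ 0 := sub_ne_zero.mpr (Ne.symm h)
    simp; field_simp

theorem spPhi_deriv (p r q s : ℝ) (hp : 0 < p) (hr : 0 < r) (hq : 0 < q) (hs : 0 ≤ s) :
    HasDerivAt (spPhi p r q) (p / (q + s * p) + r / (q + s * r)
      - s * (p / (q + s * p) * (r / (q + s * r)))) s := by
  have hA : 0 < q + s * p := by positivity
  have hB : 0 < q + s * r := by positivity
  have hlin : ∀ p, HasDerivAt (fun s : ℝ => q + s * p) p s := fun p => by
    simpa using ((hasDerivAt_id s).mul_const p).const_add q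
  by_cases h : p = r
  · subst h
    have e : spPhi p p q = fun s => Real.log (q + s * p) + s * p / (q + s * p) := by
      funext s; simp [spPhi]
    rw [e]
    have h1 := ((hlin p).log hA.ne').add
      (((hasDerivAt_id s).mul_const p).div (hlin p) hA.ne')
    refine HasDerivAt.congr_deriv h1 ?_
    simp only [id]
    field_simp
    ring
  · have e : spPhi p r q = fun s =>
        (r * Real.log (q + s * r) - p * Real.log (q + s * p)) / (r - p) := by
      funext s; simp [spPhi, h]
    have hh : r - p ≠ 0 := sub_ne_zero.mpr (Ne.symm h)
    rw [e]
    have h1 := ((((hlin r).log hB.ne').const_mul r).sub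
      (((hlin p).log hA.ne').const_mul p)).div_const (r - p)
    refine HasDerivAt.congr_deriv h1 ?_
    field_simp
    ring

open Filter Topology in
theorem spPhi_lim (p r q : ℝ) (hp : 0 < p) (hr : 0 < r) (hq : 0 < q) :
    Tendsto (fun s => spPhi p r q s - Real.log s) atTop (𝓝 (spC p r)) := by
  have hl : ∀ p : ℝ, Tendsto (fun s : ℝ => q / s + p) atTop (𝓝 p) := fun p => by
    simpa using (tendsto_const_nhds.div_atTop (tendsto_id (α := ℝ)) (a := q)).add_const p
  have hlog : ∀ p : ℝ, 0 < p →
      Tendsto (fun s : ℝ => Real.log (q / s + p)) atTop (𝓝 (Real.log p)) := fun p hp =>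
    (hl p).log hp.ne'
  have hel : ∀ p s : ℝ, 0 < p → 0 < s → Real.log (q + s * p) = Real.log (q / s + p) + Real.log s := by
    intro p s hp hs
    rw [← Real.log_mul (by positivity) hs.ne']
    congr 1; field_simp
  by_cases h : p = r
  · subst h
    have h2 : Tendsto (fun s : ℝ => Real.log (q / s + p) + p / (q / s + p)) atTop
        (𝓝 (Real.log p + p / p)) :=
      (hlog p hp).add ((tendsto_const_nhds).div (hl p) hp.ne')
    rw [div_self hp.ne'] at h2
    simp only [spC, if_true]
    refine h2.congr' ?_
    filter_upwards [eventually_gt_atTop 0] with s hs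
    simp only [spPhi, if_true]
    rw [hel p s hp hs]
    have : q + s * p ≠ 0 := by positivity
    field_simp
    ring
  · have hh : r - p ≠ 0 := sub_ne_zero.mpr (Ne.symm h)
    simp only [spC, if_neg h]
    refine ((((hlog r hr).const_mul r).sub ((hlog p hp).const_mul p)).div_const (r - p)).congr' ?_
    filter_upwards [eventually_gt_atTop 0] with s hs
    simp only [spPhi, if_neg h]
    rw [hel p s hp hs, hel r s hr hs]
    field_simp
    ring

open Filter Topology in
theorem sp_scalar {ι : Type*} [Fintype ι] (w p r q : ι → ℝ) (hp : ∀ i, 0 < p i)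
    (hr : ∀ i, 0 < r i) (hq : ∀ i, 0 < q i) (hw : ∑ i, w i = 0)
    (hG : ∀ s : ℝ, 0 ≤ s → ∑ i, w i * (p i / (q i + s * p i) + r i / (q i + s * r i)
      - s * (p i / (q i + s * p i) * (r i / (q i + s * r i)))) ≤ 0) :
    ∑ i, w i * spC (p i) (r i) ≤ ∑ i, w i * Real.log (q i) := by
  have hder : ∀ s : ℝ, 0 ≤ s → HasDerivAt (fun s => ∑ i, w i * spPhi (p i) (r i) (q i) s)
      (∑ i, w i * (p i / (q i + s * p i) + r i / (q i + s * r i)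
      - s * (p i / (q i + s * p i) * (r i / (q i + s * r i))))) s := fun s hs =>
    HasDerivAt.fun_sum fun i _ => (spPhi_deriv _ _ _ s (hp i) (hr i) (hq i) hs).const_mul (w i)
  have hanti : AntitoneOn (fun s => ∑ i, w i * spPhi (p i) (r i) (q i) s) (Set.Ici 0) := by
    apply antitoneOn_of_deriv_nonpos (convex_Ici 0)
    · exact fun s hs => (hder s hs).continuousAt.continuousWithinAt
    · intro s hs
      rw [interior_Ici] at hs
      exact (hder s (le_of_lt hs)).differentiableAt.differentiableWithinAt
    · intro s hs
      rw [interior_Ici] at hs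
      rw [(hder s (le_of_lt hs)).deriv]
      exact hG s (le_of_lt hs)
  have hlim : Tendsto (fun s => ∑ i, w i * spPhi (p i) (r i) (q i) s) atTop
      (𝓝 (∑ i, w i * spC (p i) (r i))) := by
    have := tendsto_finsetSum (Finset.univ : Finset ι) fun i _ =>
      (spPhi_lim _ _ _ (hp i) (hr i) (hq i)).const_mul (w i)
    refine this.congr fun s => ?_
    simp only [mul_sub, Finset.sum_sub_distrib, ← Finset.sum_mul, hw]
    ring
  refine le_of_tendsto hlim ?_
  filter_upwards [eventually_ge_atTop 0] with s hs
  have := hanti (Set.mem_Ici.mpr le_rfl) (Set.mem_Ici.mpr hs) hs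
  simpa only [spPhi_zero] using this

theorem sp_trace (D A B : Matrix (Fin n) (Fin n) ℂ) :
    Matrix.trace (D * (Aᴴ * B)) =
      ∑ i : Fin n × Fin n × Fin n, D i.1 i.2.1 * (star (A i.2.2 i.2.1) * B i.2.2 i.1) := by
  simp only [Matrix.trace, Matrix.diag, Matrix.mul_apply, Fintype.sum_prod_type,
    Finset.mul_sum, Matrix.conjTranspose_apply]

theorem sp_core (D U W : Matrix (Fin n) (Fin n) ℂ) (p q : Fin n → ℝ)
    (hp : ∀ i, 0 < p i) (hq : ∀ i, 0 < q i)
    (hU : U * Uᴴ = 1) (hU' : Uᴴ * U = 1) (hW : W * Wᴴ = 1) (hW' : Wᴴ * W = 1)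
    (hD : Matrix.trace D = 0)
    (hmain : ∀ s : ℝ, 0 ≤ s → ∀ Y : Matrix (Fin n) (Fin n) ℂ,
      (W * Matrix.diagonal (fun i => (q i : ℂ)) * Wᴴ) * Y +
        (s : ℂ) • (Y * (U * Matrix.diagonal (fun i => (p i : ℂ)) * Uᴴ)) =
        U * Matrix.diagonal (fun i => (p i : ℂ)) * Uᴴ →
      (Matrix.trace (D * Y) + Matrix.trace (D * Yᴴ)
      - s * Matrix.trace (D * (Yᴴ * Y))).re ≤ 0) :
    (Matrix.trace (D * (U * Matrix.diagonal (fun i => (Real.log (p i) : ℂ)) * Uᴴ))).re ≤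
    (Matrix.trace (D * (W * Matrix.diagonal (fun i => (Real.log (q i) : ℂ)) * Wᴴ))).re := by
  set T := Wᴴ * U with hT
  set D' := Uᴴ * D * U with hD'
  have hTT : Tᴴ * T = 1 := by
    rw [hT, Matrix.conjTranspose_mul, Matrix.conjTranspose_conjTranspose]
    rw [mul_assoc, ← mul_assoc W, hW, one_mul, hU']
  have hconj : ∀ X, Matrix.trace (D * X) = Matrix.trace (D' * (Uᴴ * X * U)) := by
    intro X
    rw [hD', show Uᴴ * D * U * (Uᴴ * X * U) = Uᴴ * (D * (U * Uᴴ) * X * U) by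
      simp only [mul_assoc], hU, mul_one, Matrix.trace_mul_comm Uᴴ]
    simp only [mul_assoc, hU, mul_one]
  let w : Fin n × Fin n × Fin n → ℝ := fun i =>
    (D' i.1 i.2.1 * (star (T i.2.2 i.2.1) * T i.2.2 i.1)).re
  have hwsum : ∀ c : Fin n → Fin n → ℝ,
      ∑ i : Fin n × Fin n × Fin n, w i * c i.1 i.2.1 = ∑ j, (D' j j).re * c j j := by
    intro c
    simp only [w, Fintype.sum_prod_type, ← Finset.sum_mul]
    refine Finset.sum_congr rfl fun j _ => ?_
    have : ∀ k, ∑ a, (D' j k * (star (T a k) * T a j)).re = if k = j then (D' j j).re else 0 := by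
      intro k
      have h1 : ∑ a, star (T a k) * T a j = (1 : Matrix (Fin n) (Fin n) ℂ) k j := by
        rw [← hTT]; simp [Matrix.mul_apply, Matrix.conjTranspose_apply]
      rw [← Complex.re_sum, ← Finset.mul_sum, h1, Matrix.one_apply]
      split_ifs with h
      · simp [h]
      · simp
    simp only [this]
    simp
  have hDzero : ∑ j, (D' j j).re = 0 := by
    have : Matrix.trace D' = 0 := by
      rw [hD', mul_assoc, Matrix.trace_mul_comm, mul_assoc, hU, mul_one, hD]
    rw [← Complex.re_sum]
    simpa [Matrix.trace] using congrArg Complex.re this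
  have key := sp_scalar w (fun i => p i.1) (fun i => p i.2.1) (fun i => q i.2.2)
    (fun i => hp _) (fun i => hp _) (fun i => hq _)
    (by simpa [hDzero] using hwsum (fun _ _ => 1)) ?_
  · have e1 : (Matrix.trace (D * (U * Matrix.diagonal (fun i => (Real.log (p i) : ℂ)) * Uᴴ))).re
        = ∑ i, w i * spC (p i.1) (p i.2.1) := by
      rw [hwsum (fun j k => spC (p j) (p k)), hconj,
        show Uᴴ * (U * Matrix.diagonal (fun i => (Real.log (p i) : ℂ)) * Uᴴ) * U =
        (Uᴴ * U) * Matrix.diagonal (fun i => (Real.log (p i) : ℂ)) * (Uᴴ * U) by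
          simp only [mul_assoc], hU', one_mul, mul_one]
      simp only [spC, if_true, mul_add, mul_one, Finset.sum_add_distrib, hDzero, add_zero,
        Matrix.trace, Matrix.diag, Matrix.mul_diagonal, Complex.re_sum, Complex.re_mul_ofReal]
    have e2 : (Matrix.trace (D * (W * Matrix.diagonal (fun i => (Real.log (q i) : ℂ)) * Wᴴ))).re
        = ∑ i, w i * Real.log (q i.2.2) := by
      rw [hconj, show Uᴴ * (W * Matrix.diagonal (fun i => (Real.log (q i) : ℂ)) * Wᴴ) * U =
        Tᴴ * (Matrix.diagonal (fun i => (Real.log (q i) : ℂ)) * T) by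
          simp only [hT, Matrix.conjTranspose_mul, Matrix.conjTranspose_conjTranspose, mul_assoc],
        sp_trace, Complex.re_sum]
      refine Finset.sum_congr rfl fun i _ => ?_
      rw [Matrix.diagonal_mul, ← Complex.re_mul_ofReal]
      congr 1; ring
    rw [e1, e2]; exact key
  · intro s hs
    let f : Fin n → Fin n → ℝ := fun a j => p j / (q a + s * p j)
    let Z : Matrix (Fin n) (Fin n) ℂ := Matrix.of fun a j => T a j * (f a j : ℂ)
    have hZ : Matrix.diagonal (fun i => (q i : ℂ)) * Z +
        (s : ℂ) • (Z * Matrix.diagonal (fun i => (p i : ℂ))) =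
        T * Matrix.diagonal (fun i => (p i : ℂ)) := by
      ext a j
      have hne : q a + s * p j ≠ 0 := by have := hp j; have := hq a; positivity
      have hf : q a * f a j + s * (f a j * p j) = p j := by
        have hfe : f a j * (q a + s * p j) = p j := div_mul_cancel₀ _ hne
        linear_combination hfe
      have hf' : (q a : ℂ) * f a j + s * (f a j * p j) = p j := by exact_mod_cast hf
      simp only [Matrix.add_apply, Matrix.smul_apply, Matrix.diagonal_mul, Matrix.mul_diagonal,
        Z, Matrix.of_apply, smul_eq_mul]
      linear_combination T a j * hf'
    have hm := hmain s hs (W * Z * Uᴴ) ?_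
    · have t1 : Matrix.trace (D * (W * Z * Uᴴ)) = Matrix.trace (D' * (Tᴴ * Z)) := by
        rw [hconj, show Uᴴ * (W * Z * Uᴴ) * U = Uᴴ * W * Z * (Uᴴ * U) by simp only [mul_assoc],
          hU', mul_one, hT, Matrix.conjTranspose_mul, Matrix.conjTranspose_conjTranspose]
      have t2 : Matrix.trace (D * (W * Z * Uᴴ)ᴴ) = Matrix.trace (D' * (Zᴴ * T)) := by
        rw [hconj, Matrix.conjTranspose_mul, Matrix.conjTranspose_mul,
          Matrix.conjTranspose_conjTranspose,
          show Uᴴ * (U * (Zᴴ * Wᴴ)) * U = (Uᴴ * U) * (Zᴴ * (Wᴴ * U)) by simp only [mul_assoc],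
          hU', one_mul]
      have t3 : Matrix.trace (D * ((W * Z * Uᴴ)ᴴ * (W * Z * Uᴴ))) =
          Matrix.trace (D' * (Zᴴ * Z)) := by
        rw [hconj, Matrix.conjTranspose_mul, Matrix.conjTranspose_mul,
          Matrix.conjTranspose_conjTranspose,
          show Uᴴ * (U * (Zᴴ * Wᴴ) * (W * Z * Uᴴ)) * U =
            (Uᴴ * U) * (Zᴴ * (Wᴴ * W) * Z) * (Uᴴ * U) by simp only [mul_assoc],
          hU', hW', one_mul, mul_one, mul_one]
      rw [t1, t2, t3, sp_trace, sp_trace, sp_trace, Finset.mul_sum, ← Finset.sum_add_distrib,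
        ← Finset.sum_sub_distrib, Complex.re_sum] at hm
      refine le_of_eq_of_le (Finset.sum_congr rfl fun i _ => ?_) hm
      simp only [w]
      rw [← Complex.re_mul_ofReal]
      congr 1
      have g1 : p i.1 / (q i.2.2 + s * p i.1) = f i.2.2 i.1 := rfl
      have g2 : p i.2.1 / (q i.2.2 + s * p i.2.1) = f i.2.2 i.2.1 := rfl
      rw [g1, g2]
      simp only [Z, Matrix.of_apply, star_mul', Complex.star_def, Complex.conj_ofReal]
      push_cast
      ring
    · have c1 : W * Matrix.diagonal (fun i => (q i : ℂ)) * Wᴴ * (W * Z * Uᴴ) =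
          W * (Matrix.diagonal (fun i => (q i : ℂ)) * Z) * Uᴴ := by
        rw [show W * Matrix.diagonal (fun i => (q i : ℂ)) * Wᴴ * (W * Z * Uᴴ) =
          W * Matrix.diagonal (fun i => (q i : ℂ)) * (Wᴴ * W) * (Z * Uᴴ) by
            simp only [mul_assoc], hW', mul_one]
        simp only [mul_assoc]
      have c2 : W * Z * Uᴴ * (U * Matrix.diagonal (fun i => (p i : ℂ)) * Uᴴ) =
          W * (Z * Matrix.diagonal (fun i => (p i : ℂ))) * Uᴴ := by
        rw [show W * Z * Uᴴ * (U * Matrix.diagonal (fun i => (p i : ℂ)) * Uᴴ) =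
          W * Z * (Uᴴ * U) * (Matrix.diagonal (fun i => (p i : ℂ)) * Uᴴ) by
            simp only [mul_assoc], hU', mul_one]
        simp only [mul_assoc]
      rw [c1, c2, ← Matrix.smul_mul, ← Matrix.mul_smul, ← add_mul, ← mul_add, hZ, hT,
        ← mul_assoc W, ← mul_assoc W, hW, one_mul]

theorem sp_spec (A : Matrix (Fin n) (Fin n) ℂ) (hA : A.PosDef) :
    ∃ (U : Matrix (Fin n) (Fin n) ℂ) (p : Fin n → ℝ), (∀ i, 0 < p i) ∧ U * Uᴴ = 1 ∧ Uᴴ * U = 1 ∧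
      A = U * Matrix.diagonal (fun i => (p i : ℂ)) * Uᴴ ∧
      cfc Real.log A = U * Matrix.diagonal (fun i => (Real.log (p i) : ℂ)) * Uᴴ := by
  refine ⟨hA.1.eigenvectorUnitary, hA.1.eigenvalues, hA.eigenvalues_pos, ?_, ?_, ?_, ?_⟩
  · exact Unitary.mul_star_self_of_mem hA.1.eigenvectorUnitary.2
  · exact Unitary.star_mul_self_of_mem hA.1.eigenvectorUnitary.2
  · have := hA.1.spectral_theorem
    rw [Unitary.conjStarAlgAut_apply] at this
    exact this
  · rw [hA.1.cfc_eq, Matrix.IsHermitian.cfc, Unitary.conjStarAlgAut_apply]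
    rfl

end Aux

/-- Spohn's inequality (non-negativity of the entropy production) for a GKLS
generator in diagonal form: if `σ` is positive definite with `L σ = 0`, then for every positive
definite `ρ` of unit trace, `−Re Tr (L ρ * (log ρ − log σ)) ≥ 0`, where `log` is given by the
continuous functional calculus applied to the real logarithm. -/
theorem spohn_entropy_production_nonneg {n : ℕ} (hn : 0 < n)
    (H : Matrix (Fin n) (Fin n) ℂ) (hH : H.IsHermitian)
    {κ : Type*} [Fintype κ] (V : κ → Matrix (Fin n) (Fin n) ℂ)
    (L : Matrix (Fin n) (Fin n) ℂ → Matrix (Fin n) (Fin n) ℂ)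
    (hL : ∀ ρ, L ρ = (-Complex.I) • (H * ρ - ρ * H) +
      ∑ k : κ, (V k * ρ * (V k)ᴴ -
        (1 / 2 : ℂ) • ((V k)ᴴ * V k * ρ + ρ * ((V k)ᴴ * V k))))
    (σ : Matrix (Fin n) (Fin n) ℂ) (hσ : σ.PosDef) (hσstat : L σ = 0) :
    ∀ ρ : Matrix (Fin n) (Fin n) ℂ, ρ.PosDef → Matrix.trace ρ = 1 →
      0 ≤ -(Matrix.trace (L ρ * (cfc Real.log ρ - cfc Real.log σ))).re := by
  intro ρ hρ _
  obtain ⟨U, p, hp, hU, hU', hρe, hρl⟩ := sp_spec ρ hρ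
  obtain ⟨W, q, hq, hW, hW', hσe, hσl⟩ := sp_spec σ hσ
  have hD : Matrix.trace (L ρ) = 0 := by
    have h1 := sp_duality H V ρ 1
    rw [← hL, mul_one] at h1
    have h2 : spDual H V 1 = 0 := by
      unfold spDual
      have : ∀ k, (V k)ᴴ * 1 * V k - (1 / 2 : ℂ) • ((V k)ᴴ * V k * 1 + 1 * ((V k)ᴴ * V k)) = 0 := by
        intro k
        simp only [mul_one, one_mul]
        module
      simp only [this]
      simp
    rw [h1, h2]; simp
  have := sp_core (L ρ) U W p q hp hq hU hU' hW hW' hD (fun s hs Y hY =>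
    sp_diss H V L hL σ ρ hσ.posSemidef hρ.posSemidef hσstat s hs Y
      (by rw [← hρe, ← hσe] at hY; exact hY))
  rw [mul_sub, Matrix.trace_sub, Complex.sub_re, hρl, hσl]
  linarith
end

section
/- A GKLS generator generates a positivity-preserving semigroup: for every t ≥ 0 and every positive semidefinite complex n×n matrix ρ, the matrix exp(t·L)(ρ) is positive semidefinite, where exp(t·L) is the exponential of the linear endomorphism t·L of the space of n×n complex matrices, defined by the exponential power series. -/
open scoped Matrix ComplexOrder
open Filter Topology

theorem aux_pow_sub {B : Type*} [NormedRing B] [NormOneClass B] (a b : B) (M : ℝ) (hM : 1 ≤ M)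
    (ha : ‖a‖ ≤ M) (hb : ‖b‖ ≤ M) (m : ℕ) : ‖a ^ m - b ^ m‖ ≤ m * M ^ m * ‖a - b‖ := by
  induction m with
  | zero => simp
  | succ m ih =>
    have e : a ^ (m+1) - b ^ (m+1) = a ^ m * (a - b) + (a ^ m - b ^ m) * b := by
      rw [pow_succ, pow_succ]; noncomm_ring
    have h1 : ‖a ^ m‖ ≤ M ^ m := (norm_pow_le a m).trans (pow_le_pow_left₀ (norm_nonneg _) ha m)
    have hMp : (0:ℝ) ≤ M ^ m := by positivity
    have hd := norm_nonneg (a - b)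
    calc ‖a ^ (m+1) - b ^ (m+1)‖ ≤ ‖a ^ m‖ * ‖a - b‖ + ‖a ^ m - b ^ m‖ * ‖b‖ := by
          rw [e]; exact (norm_add_le _ _).trans (add_le_add (norm_mul_le _ _) (norm_mul_le _ _))
      _ ≤ M ^ m * ‖a - b‖ + (m * M ^ m * ‖a - b‖) * M := by gcongr
      _ ≤ M ^ m * M * ‖a - b‖ + (m * M ^ m * ‖a - b‖) * M := by
          have : M ^ m ≤ M ^ m * M := le_mul_of_one_le_right hMp hM
          gcongr
      _ = _ := by push_cast; ring

theorem aux_bound {B : Type*} [NormedRing B] [NormOneClass B] [NormedAlgebra ℂ B]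
    (P : ℂ → B) (a : B) (hP : HasDerivAt P a 0) (hP0 : P 0 = 1) :
    ∃ C : ℝ, 0 ≤ C ∧ ∀ᶠ m : ℕ in atTop, ‖P ((m:ℂ)⁻¹)‖ ≤ Real.exp (C / m) := by
  have hs : Tendsto (fun m : ℕ => ((m:ℂ)⁻¹)) atTop (𝓝 0) := tendsto_inv_atTop_nhds_zero_nat
  obtain ⟨C, hC, h⟩ := hP.isBigO_sub.exists_nonneg
  refine ⟨C, hC, ?_⟩
  filter_upwards [hs.eventually h.bound] with m hm
  rw [hP0, sub_zero, norm_inv, Complex.norm_natCast] at hm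
  have : ‖P ((m:ℂ)⁻¹)‖ ≤ ‖P ((m:ℂ)⁻¹) - 1‖ + ‖(1:B)‖ := by
    simpa using norm_add_le (P ((m:ℂ)⁻¹) - 1) 1
  rw [norm_one] at this
  have := Real.add_one_le_exp (C / m)
  rw [div_eq_mul_inv] at *
  linarith

theorem aux_chernoff {B : Type*} [NormedRing B] [NormOneClass B] [NormedAlgebra ℂ B]
    [CompleteSpace B] (P : ℂ → B) (a : B) (hP : HasDerivAt P a 0) (hP0 : P 0 = 1) :
    Tendsto (fun m : ℕ => P ((m:ℂ)⁻¹) ^ m) atTop (𝓝 (NormedSpace.exp a)) := by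
  have hs : Tendsto (fun m : ℕ => ((m:ℂ)⁻¹)) atTop (𝓝 0) := tendsto_inv_atTop_nhds_zero_nat
  set Q : ℂ → B := fun s => NormedSpace.exp (s • a) with hQdef
  have hQ0 : Q 0 = 1 := by simp [hQdef]
  have hQ : HasDerivAt Q a 0 := by
    simpa using (hasDerivAt_exp_smul_const (𝕂 := ℂ) a (0:ℂ))
  obtain ⟨C, hC, h1⟩ := aux_bound P a hP hP0
  obtain ⟨D, hD, h2⟩ := aux_bound Q a hQ hQ0
  have hlo : (fun s => P s - Q s) =o[𝓝 0] (fun s : ℂ => s) := by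
    have := (hasDerivAt_iff_isLittleO_nhds_zero.1 (hP.sub hQ))
    simpa [hP0, hQ0] using this
  have hlim : Tendsto (fun m : ℕ => ‖((m:ℂ)⁻¹)‖⁻¹ * ‖P ((m:ℂ)⁻¹) - Q ((m:ℂ)⁻¹)‖) atTop (𝓝 0) := by
    have := (hlo.comp_tendsto hs).norm_norm.tendsto_div_nhds_zero
    refine this.congr fun m => ?_
    simp [div_eq_mul_inv, mul_comm]
  have hexp : ∀ᶠ m : ℕ in atTop, Q ((m:ℂ)⁻¹) ^ m = NormedSpace.exp a := by
    filter_upwards [eventually_ne_atTop 0] with m hm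
    let _ : NormedAlgebra ℚ B := NormedAlgebra.restrictScalars ℚ ℂ B
    rw [hQdef]
    simp only
    rw [← NormedSpace.exp_nsmul, ← Nat.cast_smul_eq_nsmul ℂ, smul_smul, mul_inv_cancel₀ (by exact_mod_cast hm), one_smul]
  rw [tendsto_iff_norm_sub_tendsto_zero]
  have hlim2 := hlim.const_mul (Real.exp (max C D))
  rw [mul_zero] at hlim2
  refine squeeze_zero' (Eventually.of_forall fun _ => norm_nonneg _) ?_ hlim2
  filter_upwards [h1, h2, hexp, eventually_ne_atTop 0] with m h1 h2 h3 hm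
  rw [← h3]
  have hm' : (0:ℝ) < m := by positivity
  refine (aux_pow_sub _ _ (Real.exp (max C D / m)) ?_ ?_ ?_ m).trans (le_of_eq ?_)
  · exact Real.one_le_exp (div_nonneg (hC.trans (le_max_left _ _)) hm'.le)
  · exact h1.trans (Real.exp_le_exp.2 (by gcongr; exact le_max_left _ _))
  · exact h2.trans (Real.exp_le_exp.2 (by gcongr; exact le_max_right _ _))
  · rw [← Real.exp_nat_mul, mul_div_cancel₀ _ hm'.ne', norm_inv, Complex.norm_natCast, inv_inv]
    ring

theorem aux_closed {n : ℕ} (u : ℕ → Matrix (Fin n) (Fin n) ℂ) (A : Matrix (Fin n) (Fin n) ℂ)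
    (hu : ∀ m, (u m).PosSemidef) (h : Tendsto u atTop (𝓝 A)) : A.PosSemidef := by
  refine .of_dotProduct_mulVec_nonneg ?_ fun x => ?_
  · refine tendsto_nhds_unique ?_ h
    have : Tendsto (fun m => (u m)ᴴ) atTop (𝓝 Aᴴ) :=
      ((continuous_id.matrix_conjTranspose).tendsto A).comp h
    exact this.congr fun m => (hu m).1
  · have hc : Continuous fun B : Matrix (Fin n) (Fin n) ℂ => star x ⬝ᵥ (B *ᵥ x) := by fun_prop
    exact ge_of_tendsto' ((hc.tendsto A).comp h) fun m => (hu m).dotProduct_mulVec_nonneg x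

theorem aux_main {E : Type*} [NormedAddCommGroup E] [NormedSpace ℂ E] [FiniteDimensional ℂ E]
    [Nontrivial E] (L K : Module.End ℂ E) (S : Set E)
    (hS : ∀ (u : ℕ → E) (x : E), (∀ m, u m ∈ S) → Tendsto u atTop (𝓝 x) → x ∈ S)
    (hpos : ∀ (m : ℕ), ∀ σ ∈ S, σ + (m:ℂ)⁻¹ • L σ + ((m:ℂ)⁻¹) ^ 2 • K σ ∈ S)
    (ρ : E) (hρ : ρ ∈ S) :
    ∑' k : ℕ, ((k.factorial : ℂ))⁻¹ • (L ^ k) ρ ∈ S := by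
  have : CompleteSpace E := FiniteDimensional.complete ℂ E
  let A : E →L[ℂ] E := Module.End.toContinuousLinearMap (𝕜 := ℂ) E L
  let K' : E →L[ℂ] E := Module.End.toContinuousLinearMap (𝕜 := ℂ) E K
  let P : ℂ → (E →L[ℂ] E) := fun s => 1 + s • A + (s ^ 2) • K'
  have hP0 : P 0 = 1 := by simp [P]
  have hP : HasDerivAt P A 0 := by
    have h1 := ((hasDerivAt_id (0:ℂ)).smul_const A).const_add 1
    have h2 := ((hasDerivAt_id (0:ℂ)).pow 2).smul_const K'
    have h3 := h1.add h2
    simp only [id, one_smul, Nat.cast_ofNat, Nat.add_one_sub_one, pow_one, mul_zero, zero_mul,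
      zero_smul, add_zero] at h3
    exact h3
  have hpow : ∀ (m j : ℕ), (P ((m:ℂ)⁻¹) ^ j) ρ ∈ S := by
    intro m j
    induction j with
    | zero => simpa using hρ
    | succ j ih => rw [pow_succ']; exact hpos m _ ih
  have hlim := aux_chernoff P A hP hP0
  have hsum : HasSum (fun k : ℕ => ((k.factorial : ℂ))⁻¹ • (L ^ k) ρ)
      ((NormedSpace.exp A : E →L[ℂ] E) ρ) := by
    have := (ContinuousLinearMap.apply ℂ E ρ).hasSum
      (NormedSpace.exp_series_hasSum_exp' (𝕂 := ℂ) A)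
    convert! this using 2 with k
    have e : A ^ k = Module.End.toContinuousLinearMap (𝕜 := ℂ) E (L ^ k) := (map_pow _ _ _).symm
    simp only [ContinuousLinearMap.apply_apply, smul_apply]
    rw [e]
    rfl
  rw [hsum.tsum_eq]
  refine hS (fun m => (P ((m:ℂ)⁻¹) ^ m) ρ) _ (fun m => hpow m m) ?_
  exact ((ContinuousLinearMap.apply ℂ E ρ).continuous.tendsto _).comp hlim

section
attribute [local instance] Matrix.normedAddCommGroup Matrix.normedSpace

theorem aux_matrix {n : ℕ} (hn : 0 < n) (L K : Module.End ℂ (Matrix (Fin n) (Fin n) ℂ))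
    (hpos : ∀ (m : ℕ) (σ : Matrix (Fin n) (Fin n) ℂ), σ.PosSemidef →
      (σ + (m:ℂ)⁻¹ • L σ + ((m:ℂ)⁻¹) ^ 2 • K σ).PosSemidef)
    (ρ : Matrix (Fin n) (Fin n) ℂ) (hρ : ρ.PosSemidef) :
    (∑' k : ℕ, ((k.factorial : ℂ))⁻¹ • (L ^ k) ρ).PosSemidef := by
  have : Nonempty (Fin n) := ⟨⟨0, hn⟩⟩
  have : Nontrivial (Matrix (Fin n) (Fin n) ℂ) := inferInstance
  exact aux_main L K {σ | σ.PosSemidef} (fun u x hu h => aux_closed u x hu h) hpos ρ hρ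

end

/-- A GKLS generator in diagonal form generates a positivity-preserving
semigroup: for every `t ≥ 0` and positive semidefinite `ρ`, the matrix
`exp (t • L) ρ = ∑' k, (k!)⁻¹ • ((t • L) ^ k) ρ` is positive semidefinite, where the
exponential of the linear endomorphism `t • L` is given by the exponential power series. -/
theorem gkls_semigroup_positivity_preserving {n : ℕ} (hn : 0 < n)
    (H : Matrix (Fin n) (Fin n) ℂ) (hH : H.IsHermitian)
    {κ : Type*} [Fintype κ] (V : κ → Matrix (Fin n) (Fin n) ℂ)
    (L : Module.End ℂ (Matrix (Fin n) (Fin n) ℂ))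
    (hL : ∀ ρ, L ρ = (-Complex.I) • (H * ρ - ρ * H) +
      ∑ k : κ, (V k * ρ * (V k)ᴴ -
        (1 / 2 : ℂ) • ((V k)ᴴ * V k * ρ + ρ * ((V k)ᴴ * V k)))) :
    ∀ t : ℝ, 0 ≤ t → ∀ ρ : Matrix (Fin n) (Fin n) ℂ, ρ.PosSemidef →
      (∑' k : ℕ, ((k.factorial : ℂ))⁻¹ • ((t • L) ^ k) ρ).PosSemidef := by
  intro t ht ρ hρ
  let G : Matrix (Fin n) (Fin n) ℂ := (-Complex.I) • H - (1/2 : ℂ) • ∑ k, (V k)ᴴ * V k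
  have hGs : Gᴴ = Complex.I • H - (1/2 : ℂ) • ∑ k, (V k)ᴴ * V k := by
    simp [G, Matrix.conjTranspose_sum, hH.eq, Matrix.conjTranspose_smul]
  have hLG : ∀ σ, L σ = G * σ + σ * Gᴴ + ∑ k, V k * σ * (V k)ᴴ := by
    intro σ
    rw [hL, hGs]
    simp only [G, Finset.sum_sub_distrib, sub_mul, mul_sub, smul_mul_assoc, mul_smul_comm,
      Finset.sum_mul, Finset.mul_sum, ← Finset.smul_sum, Finset.sum_add_distrib]
    module
  refine aux_matrix hn (t • L) ((t:ℂ)^2 • (LinearMap.mulLeft ℂ G ∘ₗ LinearMap.mulRight ℂ Gᴴ))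
    ?_ ρ hρ
  intro m σ hσ
  have hr : (0:ℂ) ≤ (m:ℂ)⁻¹ * t := by
    have : (0:ℝ) ≤ (m:ℝ)⁻¹ * t := by positivity
    have h := Complex.zero_le_real.2 this
    push_cast at h
    exact h
  have hst : star ((m:ℂ)⁻¹ * t) = (m:ℂ)⁻¹ * t := by simp
  have e : σ + (m:ℂ)⁻¹ • (t • L) σ + ((m:ℂ)⁻¹) ^ 2 •
        ((t:ℂ)^2 • (LinearMap.mulLeft ℂ G ∘ₗ LinearMap.mulRight ℂ Gᴴ)) σ
      = (1 + ((m:ℂ)⁻¹ * t) • G) * σ * (1 + ((m:ℂ)⁻¹ * t) • G)ᴴ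
        + ((m:ℂ)⁻¹ * t) • ∑ k, V k * σ * (V k)ᴴ := by
    have e1 : (t • L) σ = (t:ℂ) • L σ := by simp
    have e2 : ((t:ℂ)^2 • (LinearMap.mulLeft ℂ G ∘ₗ LinearMap.mulRight ℂ Gᴴ)) σ
      = (t:ℂ)^2 • (G * (σ * Gᴴ)) := rfl
    rw [e1, e2, hLG, Matrix.conjTranspose_add, Matrix.conjTranspose_smul, hst,
      Matrix.conjTranspose_one]
    simp only [add_mul, mul_add, smul_mul_assoc, mul_smul_comm, one_mul, mul_one, mul_assoc]
    module
  rw [e]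
  refine (hσ.mul_mul_conjTranspose_same _).add (.smul ?_ hr)
  exact Matrix.posSemidef_sum _ fun k _ => hσ.mul_mul_conjTranspose_same _
end

section
/- KMS condition for the Fourier coefficients of thermal bath correlation functions (finite-dimensional bath): define for each ω ∈ ℝ the ι×ι matrix γ(ω) with entries γ_{αβ}(ω) = ∑_{(k,l) with E_l − E_k = ω} e^{−βE_k} · Tr( Q_k · B_α · Q_l · B_β ). Then for all ω ∈ ℝ and all α, β ∈ ι one has γ_{αβ}(−ω) = e^{−βω} · γ_{βα}(ω). -/
open scoped Matrix

/-- KMS condition for the Fourier coefficients of thermal bath correlation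
functions (finite-dimensional bath): with
`γ α β ω = ∑_{(k,l) : E l − E k = ω} e^{−β E k} Tr (Q k * B α * Q l * B β)`,
one has `γ α β (−ω) = e^{−βω} γ β α ω` for all real `ω`. -/
theorem kms_condition_finite_bath {m : ℕ} (hm : 0 < m)
    {K : Type*} [Fintype K] (E : K → ℝ) (hE : Function.Injective E)
    (Q : K → Matrix (Fin m) (Fin m) ℂ)
    (hQherm : ∀ k : K, (Q k)ᴴ = Q k)
    (hQorth : ∀ k l : K, k ≠ l → Q k * Q l = 0)
    (hQidem : ∀ k : K, Q k * Q k = Q k)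
    (hQsum : ∑ k : K, Q k = 1)
    {ι : Type*} [Fintype ι] (B : ι → Matrix (Fin m) (Fin m) ℂ)
    (hBherm : ∀ α : ι, (B α)ᴴ = B α)
    (β : ℝ)
    (γ : ℝ → ι → ι → ℂ)
    (hγ : ∀ (ω : ℝ) (α β' : ι), γ ω α β' =
      ∑ p ∈ Finset.univ.filter (fun p : K × K => E p.2 - E p.1 = ω),
        (Real.exp (-(β * E p.1)) : ℂ) *
          Matrix.trace (Q p.1 * B α * Q p.2 * B β')) :
    ∀ (ω : ℝ) (α β' : ι), γ (-ω) α β' = (Real.exp (-(β * ω)) : ℂ) * γ ω β' α := by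
  intro ω α β'
  rw [hγ, hγ, Finset.mul_sum]
  refine Finset.sum_bij' (fun p _ => p.swap) (fun p _ => p.swap) ?_ ?_ ?_ ?_ ?_
  · rintro ⟨k, l⟩ h
    simp only [Finset.mem_filter, Finset.mem_univ, true_and, Prod.swap] at h ⊢
    linarith
  · rintro ⟨k, l⟩ h
    simp only [Finset.mem_filter, Finset.mem_univ, true_and, Prod.swap] at h ⊢
    linarith
  · intros; rfl
  · intros; rfl
  · rintro ⟨k, l⟩ h
    simp only [Finset.mem_filter, Finset.mem_univ, true_and, Prod.swap] at h ⊢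
    have hk : E k = E l + ω := by linarith
    rw [← mul_assoc, ← Complex.ofReal_mul, ← Real.exp_add]
    congr 1
    · rw [hk]; congr 2; ring
    · rw [Matrix.mul_assoc (Q k * B α), Matrix.trace_mul_comm, ← Matrix.mul_assoc]
end

section
/- Positive semidefiniteness of the dissipation-rate matrix: for each ω ∈ ℝ, the ι×ι matrix γ(ω) with entries γ_{αβ}(ω) = ∑_{(k,l) with E_l − E_k = ω} w_k · Tr( Q_k · B_αᴴ · Q_l · B_β ) is positive semidefinite (in particular Hermitian, and ∑_{α,β} conj(z_α)·γ_{αβ}(ω)·z_β ≥ 0 for every z : ι → ℂ). -/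
open scoped Matrix ComplexOrder

/-- Positive semidefiniteness of the dissipation-rate matrix: for each `ω ∈ ℝ`,
the `ι × ι` matrix with entries
`γ α β = ∑_{(k,l) : E l − E k = ω} w k * Tr (Q k * (B α)ᴴ * Q l * B β)`
is positive semidefinite. -/
theorem dissipation_matrix_posSemidef {m : ℕ} (hm : 0 < m)
    {K : Type*} [Fintype K] (E : K → ℝ)
    (Q : K → Matrix (Fin m) (Fin m) ℂ)
    (hQherm : ∀ k : K, (Q k)ᴴ = Q k)
    (hQorth : ∀ k l : K, k ≠ l → Q k * Q l = 0)
    (hQidem : ∀ k : K, Q k * Q k = Q k)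
    (w : K → ℝ) (hw : ∀ k : K, 0 ≤ w k)
    {ι : Type*} [Fintype ι] (B : ι → Matrix (Fin m) (Fin m) ℂ)
    (ω : ℝ) :
    Matrix.PosSemidef (Matrix.of fun α β' : ι =>
      ∑ p ∈ Finset.univ.filter (fun p : K × K => E p.2 - E p.1 = ω),
        (w p.1 : ℂ) * Matrix.trace (Q p.1 * (B α)ᴴ * Q p.2 * B β')) := by
  have key : (Matrix.of fun α β' : ι =>
      ∑ p ∈ Finset.univ.filter (fun p : K × K => E p.2 - E p.1 = ω),
        (w p.1 : ℂ) * Matrix.trace (Q p.1 * (B α)ᴴ * Q p.2 * B β')) =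
      ∑ p ∈ Finset.univ.filter (fun p : K × K => E p.2 - E p.1 = ω),
        (w p.1 : ℂ) •
          ((Matrix.of fun (ij : Fin m × Fin m) (β : ι) => (Q p.2 * B β * Q p.1) ij.2 ij.1)ᴴ *
            (Matrix.of fun (ij : Fin m × Fin m) (β : ι) => (Q p.2 * B β * Q p.1) ij.2 ij.1)) := by
    ext α β
    rw [Matrix.sum_apply, Matrix.of_apply]
    refine Finset.sum_congr rfl fun p _ => ?_
    rw [Matrix.smul_apply, smul_eq_mul]
    congr 1
    have h : Matrix.trace (Q p.1 * (B α)ᴴ * Q p.2 * B β) =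
        Matrix.trace ((Q p.2 * B α * Q p.1)ᴴ * (Q p.2 * B β * Q p.1)) := by
      rw [Matrix.conjTranspose_mul, Matrix.conjTranspose_mul, hQherm, hQherm]
      rw [← Matrix.mul_assoc _ _ (Q p.1), Matrix.trace_mul_comm _ (Q p.1)]
      simp only [← Matrix.mul_assoc]
      rw [hQidem, Matrix.mul_assoc _ (Q p.2) (Q p.2), hQidem]
    rw [h, Matrix.mul_apply, Fintype.sum_prod_type, Matrix.trace]
    simp only [Matrix.diag_apply, Matrix.mul_apply (M := (Q p.2 * B α * Q p.1)ᴴ),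
      Matrix.conjTranspose_apply, Matrix.of_apply]
  rw [key]
  refine Matrix.posSemidef_sum _ fun p _ => ?_
  exact (Matrix.posSemidef_conjTranspose_mul_self _).smul
    (by exact_mod_cast hw p.1)
end

section
/- Matrix-valued Bochner-type theorem: let C : ℝ → Matrix ι ι ℂ be continuous, with every entry integrable over ℝ, and of positive type in the sense that for every finite family of times t_1,…,t_m ∈ ℝ and vectors z_1,…,z_m : ι → ℂ the number ∑_{i,j=1}^m ∑_{α,β∈ι} conj((z_i)_α) · (C(t_i − t_j))_{αβ} · (z_j)_β is a nonnegative real. Then for every ω ∈ ℝ the matrix γ(ω) with entries γ_{αβ}(ω) = ∫_ℝ e^{iωs} · (C(s))_{αβ} ds is positive semidefinite. -/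
open scoped Matrix ComplexOrder

open MeasureTheory ProbabilityTheory Filter Topology in
/-- Law of the difference of two distinct coordinates of an i.i.d. Gaussian family. -/
lemma bochner_map_diff (m : ℕ) (v : NNReal) (i j : Fin m) (hij : i ≠ j) :
    (Measure.pi (fun _ : Fin m => gaussianReal 0 v)).map (fun t => t i - t j)
      = gaussianReal 0 (v + v) := by
  have hind : iIndepFun (fun (i : Fin m) (t : Fin m → ℝ) => t i)
      (Measure.pi (fun _ : Fin m => gaussianReal 0 v)) :=
    iIndepFun_pi (X := fun _ => id) (fun _ => aemeasurable_id)
  have h1 := (hind.indepFun hij).comp measurable_id measurable_neg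
  have hX : (Measure.pi (fun _ : Fin m => gaussianReal 0 v)).map (fun t => t i)
      = gaussianReal 0 v := (measurePreserving_eval _ i).map_eq
  have hY : (Measure.pi (fun _ : Fin m => gaussianReal 0 v)).map (Neg.neg ∘ fun t => t j)
      = gaussianReal 0 v := by
    have hm : Measurable (fun t : Fin m → ℝ => t j) := measurable_pi_apply j
    have hY0 : (Measure.pi (fun _ : Fin m => gaussianReal 0 v)).map (fun t => t j)
      = gaussianReal 0 v := (measurePreserving_eval _ j).map_eq
    rw [← Measure.map_map measurable_neg hm, hY0]
    simpa using gaussianReal_map_neg (μ := 0) (v := v)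
  have := gaussianReal_add_gaussianReal_of_indepFun h1 hX hY
  rw [add_zero] at this
  rw [← this]
  congr 1

open MeasureTheory ProbabilityTheory Filter Topology in
lemma bochner_integrable_gaussian (f : ℝ → ℂ) (hi : Integrable f) (v : NNReal) (hv : v ≠ 0) :
    Integrable f (gaussianReal 0 v) := by
  rw [gaussianReal_of_var_ne_zero _ hv, integrable_withDensity_iff_integrable_smul'
    (measurable_gaussianPDF _ _) (ae_of_all _ fun _ => gaussianPDF_lt_top)]
  simp only [toReal_gaussianPDF, Complex.real_smul]
  refine Integrable.bdd_mul (c := (√(2 * Real.pi * v))⁻¹) hi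
    (Complex.measurable_ofReal.comp (measurable_gaussianPDFReal _ _)).aestronglyMeasurable (ae_of_all _ fun x => ?_)
  rw [Complex.norm_real, Real.norm_of_nonneg (gaussianPDFReal_nonneg _ _ _), gaussianPDFReal]
  refine mul_le_of_le_one_right (by positivity) (Real.exp_le_one_iff.2 ?_)
  rw [neg_div]
  exact neg_nonpos.2 (by positivity)

open MeasureTheory ProbabilityTheory Filter Topology in
lemma bochner_gaussian_nonneg (f : ℝ → ℂ) (hi : Integrable f)
    (hf : ∀ (m : ℕ) (t : Fin m → ℝ), 0 ≤ ∑ i, ∑ j, f (t i - t j)) (v : NNReal) (hv : v ≠ 0) :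
    0 ≤ ∫ s, f s ∂(gaussianReal 0 (v + v)) := by
  have hvv : v + v ≠ 0 := by simpa using hv
  have hig := bochner_integrable_gaussian f hi (v + v) hvv
  set A := ∫ s, f s ∂(gaussianReal 0 (v + v)) with hA
  have key : ∀ m : ℕ, 0 ≤ f 0 * ((1 / ((m : ℝ) + 1) : ℝ) : ℂ) + A := by
    intro m
    set P := Measure.pi (fun _ : Fin (m + 2) => gaussianReal 0 v) with hP
    have hint : ∀ i j : Fin (m + 2), Integrable (fun t => f (t i - t j)) P := by
      intro i j
      by_cases hij : i = j
      · subst hij; simp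
      · have := bochner_map_diff (m + 2) v i j hij
        rw [← this] at hig
        exact hig.comp_measurable (by fun_prop)
    have hval : ∀ i j : Fin (m + 2), ∫ t, f (t i - t j) ∂P = if i = j then f 0 else A := by
      intro i j
      split_ifs with hij
      · subst hij; simp
      · have := bochner_map_diff (m + 2) v i j hij
        rw [hA, ← this, integral_map (by fun_prop)]
        rw [this]; exact hig.aestronglyMeasurable
    have h0 : 0 ≤ ∫ t, ∑ i, ∑ j, f (t i - t j) ∂P := integral_nonneg (fun t => hf _ t)
    rw [integral_finsetSum _ (fun i _ => integrable_finsetSum _ fun j _ => hint i j)] at h0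
    simp_rw [integral_finsetSum _ (fun j _ => hint _ j), hval] at h0
    have hrow : ∀ i : Fin (m + 2), (∑ j, if i = j then f 0 else A) = f 0 + (m + 1) * A := by
      intro i
      have : ∀ j, (if i = j then f 0 else A) = (if i = j then f 0 - A else 0) + A := by
        intro j; split_ifs <;> simp
      simp_rw [this, Finset.sum_add_distrib]
      simp
      ring
    simp_rw [hrow] at h0
    have hc : (0 : ℂ) ≤ ((1 / (((m : ℝ) + 1) * (m + 2)) : ℝ) : ℂ) := by
      rw [Complex.zero_le_real]; positivity
    have := mul_nonneg hc h0
    convert this using 1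
    have h1 : (m : ℂ) + 1 ≠ 0 := by exact_mod_cast Nat.succ_ne_zero m
    have h2 : (m : ℂ) + 2 ≠ 0 := by exact_mod_cast Nat.succ_ne_zero (m + 1)
    simp
    field_simp
  have hl : Tendsto (fun m : ℕ => f 0 * ((1 / ((m : ℝ) + 1) : ℝ) : ℂ) + A) atTop
      (𝓝 (f 0 * ((0 : ℝ) : ℂ) + A)) :=
    (((Complex.continuous_ofReal.tendsto 0).comp
      tendsto_one_div_add_atTop_nhds_zero_nat).const_mul (f 0)).add_const A
  have := ge_of_tendsto' hl key
  simpa using this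

open MeasureTheory ProbabilityTheory Filter Topology in
lemma bochner_scalar (f : ℝ → ℂ) (hi : Integrable f)
    (hf : ∀ (m : ℕ) (t : Fin m → ℝ), 0 ≤ ∑ i, ∑ j, f (t i - t j)) : 0 ≤ ∫ s, f s := by
  have key : ∀ n : ℕ, 0 ≤ ∫ s, Real.exp (-s ^ 2 * (1 / ((n : ℝ) + 1))) • f s := by
    intro n
    set v : NNReal := ((n : NNReal) + 1) / 4 with hv
    have hv0 : v ≠ 0 := by positivity
    have hvv : v + v ≠ 0 := by positivity
    have h := bochner_gaussian_nonneg f hi hf v hv0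
    rw [integral_gaussianReal_eq_integral_smul hvv] at h
    simp_rw [gaussianPDFReal, mul_smul, integral_smul] at h
    have hs : 0 < √(2 * Real.pi * ((v + v : NNReal) : ℝ)) := by
      have : (0 : ℝ) < ((v + v : NNReal) : ℝ) := by exact_mod_cast pos_iff_ne_zero.2 hvv
      positivity
    have h2 := smul_nonneg hs.le h
    rw [smul_smul, mul_inv_cancel₀ hs.ne', one_smul] at h2
    convert h2 using 6
    rw [hv]
    push_cast
    field_simp
    ring
  have hl : Tendsto (fun n : ℕ => ∫ s, Real.exp (-s ^ 2 * (1 / ((n : ℝ) + 1))) • f s) atTop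
      (𝓝 (∫ s, f s)) := by
    refine tendsto_integral_of_dominated_convergence (fun s => ‖f s‖) (fun n => ?_) hi.norm
      (fun n => ae_of_all _ fun s => ?_) (ae_of_all _ fun s => ?_)
    · have hc : Continuous (fun s : ℝ => Real.exp (-s ^ 2 * (1 / ((n : ℝ) + 1)))) := by fun_prop
      exact hc.aestronglyMeasurable.smul hi.aestronglyMeasurable
    · rw [norm_smul, Real.norm_of_nonneg (Real.exp_nonneg _)]
      refine mul_le_of_le_one_left (norm_nonneg _) (Real.exp_le_one_iff.2 ?_)
      rw [neg_mul]
      exact neg_nonpos.2 (by positivity)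
    · have h1 : Tendsto (fun n : ℕ => Real.exp (-s ^ 2 * (1 / ((n : ℝ) + 1)))) atTop
          (𝓝 (Real.exp (-s ^ 2 * 0))) :=
        (Real.continuous_exp.tendsto _).comp
          (tendsto_one_div_add_atTop_nhds_zero_nat.const_mul _)
      simpa using h1.smul_const (f s)
  exact ge_of_tendsto' hl key

lemma bochner_posSemidef_of_nonneg {ι : Type*} [Fintype ι] (M : Matrix ι ι ℂ)
    (h : ∀ z : ι → ℂ, 0 ≤ star z ⬝ᵥ (M *ᵥ z)) : M.PosSemidef := by
  classical
  rw [Matrix.posSemidef_iff_dotProduct_mulVec]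
  refine ⟨?_, h⟩
  rw [← Matrix.isSymmetric_toEuclideanLin_iff, LinearMap.isSymmetric_iff_inner_map_self_real]
  intro v
  have h1 := h v.ofLp
  have h2 : inner ℂ v (M.toEuclideanLin v) = star v.ofLp ⬝ᵥ (M *ᵥ v.ofLp) := by
    simp [EuclideanSpace.inner_eq_star_dotProduct, dotProduct_comm]
  rw [← h2] at h1
  rw [inner_conj_symm, ← inner_conj_symm (M.toEuclideanLin v) v]
  exact (Complex.conj_eq_iff_im.2 (Complex.nonneg_iff.1 h1).2.symm).symm

/-- Matrix-valued Bochner-type theorem: if `C : ℝ → Matrix ι ι ℂ` is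
continuous, entrywise integrable, and of positive type, then for every `ω ∈ ℝ` the matrix of
Fourier coefficients `γ α β = ∫ s, e^{iωs} (C s) α β` is positive semidefinite. -/
theorem matrix_bochner_posSemidef {ι : Type*} [Fintype ι]
    (C : ℝ → Matrix ι ι ℂ) (hcont : Continuous C)
    (hint : ∀ α β : ι, MeasureTheory.Integrable (fun s : ℝ => C s α β))
    (hpos : ∀ (m : ℕ) (t : Fin m → ℝ) (z : Fin m → ι → ℂ),
      0 ≤ ∑ i : Fin m, ∑ j : Fin m, ∑ α : ι, ∑ β : ι,
        (starRingEnd ℂ) (z i α) * C (t i - t j) α β * z j β) :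
    ∀ ω : ℝ, Matrix.PosSemidef (Matrix.of fun α β : ι =>
      ∫ s : ℝ, Complex.exp (Complex.I * ω * s) * C s α β) := by
  intro ω
  apply bochner_posSemidef_of_nonneg
  intro z
  have hI : ∀ α β : ι, MeasureTheory.Integrable
      (fun s : ℝ => Complex.exp (Complex.I * ω * s) * C s α β) := by
    intro α β
    refine MeasureTheory.Integrable.bdd_mul (c := 1) (hint α β)
      (Continuous.aestronglyMeasurable (by fun_prop)) (MeasureTheory.ae_of_all _ fun s => ?_)
    rw [Complex.norm_exp]
    simp
  have hI2 : ∀ α β : ι, MeasureTheory.Integrable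
      (fun s : ℝ => star (z α) * (Complex.exp (Complex.I * ω * s) * C s α β) * z β) :=
    fun α β => ((hI α β).const_mul _).mul_const _
  have hs := bochner_scalar (fun s : ℝ => ∑ α, ∑ β,
    star (z α) * (Complex.exp (Complex.I * ω * s) * C s α β) * z β)
    (MeasureTheory.integrable_finsetSum _ fun α _ =>
      MeasureTheory.integrable_finsetSum _ fun β _ => hI2 α β) ?_
  · rw [MeasureTheory.integral_finsetSum _ (fun α _ =>
      MeasureTheory.integrable_finsetSum _ fun β _ => hI2 α β)] at hs
    simp_rw [MeasureTheory.integral_finsetSum _ (fun β _ => hI2 _ β),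
      MeasureTheory.integral_mul_const, MeasureTheory.integral_const_mul] at hs
    simpa [dotProduct, Matrix.mulVec, Finset.mul_sum, mul_assoc] using hs
  · intro m t
    have h := hpos m t (fun i α => Complex.exp (-(Complex.I * ω * t i)) * z α)
    refine h.trans_eq ?_
    refine Finset.sum_congr rfl fun i _ => Finset.sum_congr rfl fun j _ =>
      Finset.sum_congr rfl fun α _ => Finset.sum_congr rfl fun β _ => ?_
    have he : Complex.exp (Complex.I * ω * ((t i - t j : ℝ) : ℂ))
        = (starRingEnd ℂ) (Complex.exp (-(Complex.I * ω * t i)))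
          * Complex.exp (-(Complex.I * ω * t j)) := by
      rw [← Complex.exp_conj, ← Complex.exp_add]
      congr 1
      simp
      ring
    rw [he, map_mul]
    simp only [starRingEnd_apply]
    ring
end

section
/- Finite-dimensional secular averaging theorem with a nearly degenerate Hamiltonian (core of the unified weak-coupling limit): for λ > 0 let L_λ be the superoperator L_λ(ρ) = −i·((H₀+λ²·δH)·ρ − ρ·(H₀+λ²·δH)) on complex n×n matrices, let K be any linear map on complex n×n matrices, and let K^sec = ∑_{ω∈F⁰} Π_ω ∘ K ∘ Π_ω be its secular part, where F⁰ = {ε_k − ε_l : k,l ∈ K} and Π_ω(X) = ∑_{(k,l) with ε_k − ε_l = ω} P_l · X · P_k. Then for every n×n matrix ρ and every τ₁ > 0, lim_{λ→0⁺} sup{ ‖exp(t·(L_λ + λ²·K))(ρ) − exp(t·(L_λ + λ²·K^sec))(ρ)‖ : t ≥ 0, λ²·t ≤ τ₁ } = 0, where exp denotes the exponential of linear endomorphisms of Matrix n n ℂ and ‖·‖ is the Frobenius norm. -/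
open scoped Matrix

attribute [local instance] Matrix.frobeniusNormedAddCommGroup Matrix.frobeniusNormedSpace

section SecularHelpers

open NormedSpace in
/-- A bounded group stays bounded under a small perturbation, on times `s * t ≤ τ`. -/
lemma secular_exp_bound {A : Type*} [NormedRing A] [NormedAlgebra ℝ A] [CompleteSpace A]
    (L M : A) (C : ℝ) (hC : ∀ t : ℝ, ‖exp (t • L)‖ ≤ C) (s t : ℝ) (hs : 0 ≤ s) (ht : 0 ≤ t) :
    ‖exp (t • (L + s • M))‖ ≤ C * (‖(1 : A)‖ * Real.exp (C * ‖M‖ * C * (s * t))) := by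
  have hC0 : 0 ≤ C := (norm_nonneg _).trans (hC 0)
  let _ : NormedAlgebra ℚ A := NormedAlgebra.restrictScalars ℚ ℝ A
  set B := L + s • M with hB
  have hinv : ∀ u : ℝ, exp (u • L) * exp ((-u) • L) = 1 := by
    intro u
    rw [← exp_add_of_commute, ← add_smul]
    · simp
    · exact ((Commute.refl L).smul_left _).smul_right _
  have hd : ∀ u : ℝ, HasDerivAt (fun u : ℝ => exp ((-u) • L) * exp (u • B))
      (exp ((-u) • L) * (s • M) * exp (u • B)) u := by
    intro u
    have h1 : HasDerivAt (fun u : ℝ => exp ((-u) • L)) (-(exp ((-u) • L) * L)) u := by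
      have := (hasDerivAt_exp_smul_const (𝕂 := ℝ) L (-u)).scomp u (hasDerivAt_neg u)
      simpa [Function.comp_def] using this
    have h2 := hasDerivAt_exp_smul_const' (𝕂 := ℝ) B u
    refine (h1.mul h2).congr_deriv ?_
    rw [hB]; noncomm_ring
  have key := norm_le_gronwallBound_of_norm_deriv_right_le
    (f := fun u : ℝ => exp ((-u) • L) * exp (u • B))
    (f' := fun u : ℝ => exp ((-u) • L) * (s • M) * exp (u • B))
    (δ := ‖(1 : A)‖) (K := C * ‖M‖ * C * s) (ε := 0) (a := 0) (b := t)
    (fun u _ => (hd u).continuousAt.continuousWithinAt) (fun u _ => (hd u).hasDerivWithinAt)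
    (by simp) ?_ t ⟨ht, le_rfl⟩
  · rw [gronwallBound_ε0] at key
    have e : exp (t • B) = exp (t • L) * (exp ((-t) • L) * exp (t • B)) := by
      rw [← mul_assoc, hinv, one_mul]
    rw [e]
    refine (norm_mul_le _ _).trans (mul_le_mul (hC t) (key.trans_eq ?_) (norm_nonneg _) hC0)
    congr 2; ring
  · intro u _
    have e : exp ((-u) • L) * (s • M) * exp (u • B) =
        exp ((-u) • L) * (s • M) * exp (u • L) * (exp ((-u) • L) * exp (u • B)) := by
      rw [mul_assoc _ (exp (u • L)), ← mul_assoc (exp (u • L)), hinv, one_mul]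
    rw [e, add_zero]
    refine (norm_mul_le _ _).trans (mul_le_mul_of_nonneg_right ?_ (norm_nonneg _))
    calc ‖exp ((-u) • L) * (s • M) * exp (u • L)‖
        ≤ ‖exp ((-u) • L)‖ * ‖s • M‖ * ‖exp (u • L)‖ :=
          (norm_mul_le _ _).trans (mul_le_mul_of_nonneg_right (norm_mul_le _ _) (norm_nonneg _))
      _ ≤ C * (s * ‖M‖) * C := by
          rw [norm_smul, Real.norm_of_nonneg hs]
          gcongr
          · exact hC _
          · exact hC _
      _ = C * ‖M‖ * C * s := by ring

open NormedSpace in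
/-- Averaging in a Banach algebra: if `M₁ - M₂` is a commutator with `L`, the perturbed groups
are `O(s)`-close for `s * t ≤ τ`. -/
lemma secular_avg_algebra {A : Type*} [NormedRing A] [NormedAlgebra ℝ A] [CompleteSpace A]
    (L M₁ M₂ S : A) (C : ℝ) (hC : ∀ t : ℝ, ‖exp (t • L)‖ ≤ C)
    (hS : S * L - L * S = M₁ - M₂) (τ : ℝ) :
    ∃ C' : ℝ, 0 ≤ C' ∧ ∀ s t : ℝ, 0 ≤ s → 0 ≤ t → s * t ≤ τ →
      ‖exp (t • (L + s • M₁)) - exp (t • (L + s • M₂))‖ ≤ C' * s := by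
  have hC0 : 0 ≤ C := (norm_nonneg _).trans (hC 0)
  set R := M₁ * S - S * M₂ with hR
  set D₁ := C * (‖(1 : A)‖ * Real.exp (C * ‖M₁‖ * C * |τ|)) with hD₁
  set D₂ := C * (‖(1 : A)‖ * Real.exp (C * ‖M₂‖ * C * |τ|)) with hD₂
  have h1 : ∀ s t : ℝ, 0 ≤ s → 0 ≤ t → s * t ≤ τ → ‖exp (t • (L + s • M₁))‖ ≤ D₁ := by
    intro s t hs ht hst
    refine (secular_exp_bound L M₁ C hC s t hs ht).trans ?_
    have := hst.trans (le_abs_self τ)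
    rw [hD₁]; gcongr
  have h2 : ∀ s t : ℝ, 0 ≤ s → 0 ≤ t → s * t ≤ τ → ‖exp (t • (L + s • M₂))‖ ≤ D₂ := by
    intro s t hs ht hst
    refine (secular_exp_bound L M₂ C hC s t hs ht).trans ?_
    have := hst.trans (le_abs_self τ)
    rw [hD₂]; gcongr
  have hD₁0 : 0 ≤ D₁ := by positivity
  have hD₂0 : 0 ≤ D₂ := by positivity
  refine ⟨D₁ * ‖R‖ * D₂ * |τ| + D₁ * ‖S‖ + ‖S‖ * D₂, by positivity, ?_⟩
  intro s t hs ht hst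
  set a := L + s • M₁ with ha
  set b := L + s • M₂ with hb
  set T : A := 1 + s • S with hT
  have hint : a * T - T * b = s ^ 2 • R := by
    have : M₁ = S * L - L * S + M₂ := by rw [hS]; abel
    have e : a * T - T * b = s • (M₁ - M₂ - (S * L - L * S)) + s ^ 2 • R := by
      rw [ha, hb, hT, hR]
      simp only [mul_add, add_mul, mul_one, one_mul, smul_sub, mul_smul_comm, smul_mul_assoc,
        smul_smul, smul_add, pow_two]
      abel
    rw [e, hS]; simp
  have hd : ∀ u : ℝ, HasDerivAt (fun u : ℝ => exp ((t - u) • a) * T * exp (u • b))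
      (-(exp ((t - u) • a) * (s ^ 2 • R) * exp (u • b))) u := by
    intro u
    have h1 : HasDerivAt (fun u : ℝ => exp ((t - u) • a)) (-(exp ((t - u) • a) * a)) u := by
      have := (hasDerivAt_exp_smul_const (𝕂 := ℝ) a (t - u)).scomp u
        ((hasDerivAt_id u).const_sub t)
      simpa [Function.comp_def] using this
    have h2 := hasDerivAt_exp_smul_const' (𝕂 := ℝ) b u
    refine ((h1.mul_const T).mul h2).congr_deriv ?_
    rw [← hint]; noncomm_ring
  have key := norm_image_sub_le_of_norm_deriv_le_segment'
    (f := fun u : ℝ => exp ((t - u) • a) * T * exp (u • b)) (a := 0) (b := t)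
    (C := D₁ * (s ^ 2 * ‖R‖) * D₂)
    (fun u _ => (hd u).hasDerivWithinAt) ?_ t ⟨ht, le_rfl⟩
  · simp only [sub_self, zero_smul, exp_zero, one_mul, mul_one, sub_zero] at key
    have e : exp (t • a) - exp (t • b) = -(T * exp (t • b) - exp (t • a) * T)
        - s • (exp (t • a) * S) + s • (S * exp (t • b)) := by
      rw [hT]
      simp only [mul_add, add_mul, mul_one, one_mul, mul_smul_comm, smul_mul_assoc]
      abel
    rw [e]
    have k2 : ‖s • (exp (t • a) * S)‖ ≤ s * (D₁ * ‖S‖) := by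
      rw [norm_smul, Real.norm_of_nonneg hs]
      gcongr
      exact (norm_mul_le _ _).trans (by gcongr; exact h1 s t hs ht hst)
    have k3 : ‖s • (S * exp (t • b))‖ ≤ s * (‖S‖ * D₂) := by
      rw [norm_smul, Real.norm_of_nonneg hs]
      gcongr
      exact (norm_mul_le _ _).trans (by gcongr; exact h2 s t hs ht hst)
    have k1 : ‖-(T * exp (t • b) - exp (t • a) * T)‖ ≤ s * (D₁ * ‖R‖ * D₂ * |τ|) := by
      rw [norm_neg]
      refine key.trans ?_
      calc D₁ * (s ^ 2 * ‖R‖) * D₂ * t = s * (D₁ * ‖R‖ * D₂ * (s * t)) := by ring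
        _ ≤ _ := by
          have := hst.trans (le_abs_self τ)
          gcongr
    refine (norm_add_le _ _).trans ?_
    have := norm_sub_le (-(T * exp (t • b) - exp (t • a) * T)) (s • (exp (t • a) * S))
    linarith
  · intro u hu
    rw [norm_neg]
    have b1 : ‖exp ((t - u) • a)‖ ≤ D₁ := h1 s (t - u) hs (by linarith [hu.2])
      (le_trans (mul_le_mul_of_nonneg_left (by linarith [hu.1]) hs) hst)
    have b2 : ‖exp (u • b)‖ ≤ D₂ := h2 s u hs hu.1
      (le_trans (mul_le_mul_of_nonneg_left hu.2.le hs) hst)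
    calc ‖exp ((t - u) • a) * (s ^ 2 • R) * exp (u • b)‖
        ≤ ‖exp ((t - u) • a)‖ * ‖s ^ 2 • R‖ * ‖exp (u • b)‖ :=
          (norm_mul_le _ _).trans (mul_le_mul_of_nonneg_right (norm_mul_le _ _) (norm_nonneg _))
      _ ≤ D₁ * (s ^ 2 * ‖R‖) * D₂ := by
          rw [norm_smul, Real.norm_of_nonneg (sq_nonneg s)]
          gcongr

open NormedSpace in
/-- Averaging with a diagonal generator in a complex Banach algebra. -/
lemma secular_avg_diag {A : Type*} [NormedRing A] [NormedAlgebra ℂ A] [CompleteSpace A]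
    (F : Finset ℝ) (Q : ℝ → A) (L D M : A)
    (hQ1 : ∑ w ∈ F, Q w = 1)
    (hLQ : ∀ w, L * Q w = (Complex.I * w) • Q w)
    (hQL : ∀ w, Q w * L = (Complex.I * w) • Q w) (τ : ℝ) :
    ∃ C' : ℝ, 0 ≤ C' ∧ ∀ s t : ℝ, 0 ≤ s → 0 ≤ t → s * t ≤ τ →
      ‖exp ((t : ℂ) • (L + (s : ℂ) • (D + M))) -
        exp ((t : ℂ) • (L + (s : ℂ) • (D + ∑ w ∈ F, Q w * M * Q w)))‖ ≤ C' * s := by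
  let _ : NormedAlgebra ℝ A := NormedAlgebra.restrictScalars ℝ ℂ A
  have hexpQ : ∀ (t : ℝ) (w : ℝ),
      exp ((t : ℂ) • L) * Q w = Complex.exp (t * (Complex.I * w)) • Q w := by
    intro t w
    have hp : ∀ k : ℕ, ((t : ℂ) • L) ^ k * Q w = (t * (Complex.I * w)) ^ k • Q w := by
      intro k
      induction k with
      | zero => simp
      | succ k ih =>
        rw [pow_succ, mul_assoc, smul_mul_assoc, hLQ, smul_smul, mul_smul_comm, ih, smul_smul,
          pow_succ, mul_comm]
    have e1 := (exp_series_hasSum_exp' (𝕂 := ℂ) ((t : ℂ) • L)).mul_right (Q w)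
    have e2 := (exp_series_hasSum_exp' (𝕂 := ℂ) ((t : ℂ) * (Complex.I * w))).smul_const (Q w)
    rw [← Complex.exp_eq_exp_ℂ] at e2
    refine e1.unique ?_
    have hfun : (fun k : ℕ => ((k.factorial : ℂ))⁻¹ • ((t : ℂ) • L) ^ k * Q w) =
        fun k : ℕ => (((k.factorial : ℂ))⁻¹ • ((t : ℂ) * (Complex.I * w)) ^ k) • Q w := by
      funext k
      rw [smul_mul_assoc, hp, smul_smul, smul_eq_mul]
    rw [hfun]
    exact e2
  have hC : ∀ t : ℝ, ‖exp (t • L)‖ ≤ ∑ w ∈ F, ‖Q w‖ := by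
    intro t
    have e : exp (t • L) = ∑ w ∈ F, Complex.exp (t * (Complex.I * w)) • Q w := by
      calc exp (t • L) = exp ((t : ℂ) • L) * ∑ w ∈ F, Q w := by rw [hQ1, mul_one]; rfl
        _ = _ := by rw [Finset.mul_sum]; exact Finset.sum_congr rfl fun w _ => hexpQ t w
    rw [e]
    refine (norm_sum_le _ _).trans (Finset.sum_le_sum fun w _ => ?_)
    rw [norm_smul]
    have : (t : ℂ) * (Complex.I * w) = ((t * w : ℝ) : ℂ) * Complex.I := by push_cast; ring
    rw [this, Complex.norm_exp_ofReal_mul_I, one_mul]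
  set S : A := ∑ w ∈ F, ∑ v ∈ F, (Complex.I * ((v : ℂ) - w))⁻¹ • (Q w * M * Q v) with hSdef
  have hM : M = ∑ w ∈ F, ∑ v ∈ F, Q w * M * Q v := by
    simp_rw [← Finset.mul_sum, hQ1, mul_one, ← Finset.sum_mul, hQ1, one_mul]
  have hS : S * L - L * S = (D + M) - (D + ∑ w ∈ F, Q w * M * Q w) := by
    rw [add_sub_add_left_eq_sub]
    conv_rhs => rw [hM]
    rw [hSdef, Finset.sum_mul, Finset.mul_sum, ← Finset.sum_sub_distrib]
    have hd : ∑ w ∈ F, Q w * (∑ w ∈ F, ∑ v ∈ F, Q w * M * Q v) * Q w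
        = ∑ w ∈ F, Q w * M * Q w := by rw [← hM]
    rw [hd, ← Finset.sum_sub_distrib]
    refine Finset.sum_congr rfl fun w hw => ?_
    have hdiag : Q w * M * Q w = ∑ v ∈ F, if v = w then Q w * M * Q v else 0 := by
      rw [Finset.sum_ite_eq' F w, if_pos hw]
    rw [hdiag, Finset.sum_mul, Finset.mul_sum, ← Finset.sum_sub_distrib,
      ← Finset.sum_sub_distrib]
    refine Finset.sum_congr rfl fun v _ => ?_
    rw [smul_mul_assoc, mul_smul_comm, mul_assoc _ (Q v), hQL, ← mul_assoc L, ← mul_assoc L, hLQ,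
      mul_smul_comm, smul_mul_assoc, smul_mul_assoc, ← smul_sub, ← sub_smul, smul_smul]
    by_cases h : v = w
    · simp [h]
    · rw [if_neg h, sub_zero, ← mul_sub, inv_mul_cancel₀, one_smul]
      have : (v : ℂ) - w ≠ 0 := by
        rw [sub_ne_zero]; exact_mod_cast h
      exact mul_ne_zero Complex.I_ne_zero this
  exact secular_avg_algebra L _ _ S _ hC hS τ

/-- The algebra lemma transported to linear endomorphisms of a finite-dimensional space. -/
lemma secular_avg_end {V : Type*} [NormedAddCommGroup V] [NormedSpace ℂ V]
    [FiniteDimensional ℂ V]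
    (F : Finset ℝ) (Q : ℝ → Module.End ℂ V) (L D M : Module.End ℂ V)
    (hQ1 : ∑ w ∈ F, Q w = 1)
    (hLQ : ∀ w, L * Q w = (Complex.I * w) • Q w)
    (hQL : ∀ w, Q w * L = (Complex.I * w) • Q w) (ρ : V) (τ : ℝ) :
    ∃ C' : ℝ, 0 ≤ C' ∧ ∀ s t : ℝ, 0 ≤ s → 0 ≤ t → s * t ≤ τ →
      ‖(∑' k : ℕ, ((k.factorial : ℂ))⁻¹ • (((t : ℂ) • (L + (s : ℂ) • (D + M))) ^ k) ρ) -
        (∑' k : ℕ, ((k.factorial : ℂ))⁻¹ •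
          (((t : ℂ) • (L + (s : ℂ) • (D + ∑ w ∈ F, Q w * M * Q w))) ^ k) ρ)‖ ≤ C' * s := by
  have : CompleteSpace V := FiniteDimensional.complete ℂ V
  let φ := Module.End.toContinuousLinearMap (𝕜 := ℂ) V
  have hts : ∀ X : Module.End ℂ V,
      (∑' k : ℕ, ((k.factorial : ℂ))⁻¹ • (X ^ k) ρ) = NormedSpace.exp (φ X) ρ := by
    intro X
    have h := NormedSpace.exp_series_hasSum_exp' (𝕂 := ℂ) (φ X)
    have h2 := h.mapL (ContinuousLinearMap.apply ℂ V ρ)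
    rw [ContinuousLinearMap.apply_apply] at h2
    rw [← h2.tsum_eq]
    refine tsum_congr fun k => ?_
    rw [← map_pow]
    rfl
  obtain ⟨C', h0, h⟩ := secular_avg_diag F (fun w => φ (Q w)) (φ L) (φ D) (φ M)
    (by rw [← map_sum, hQ1, map_one])
    (fun w => by rw [← map_mul, hLQ, map_smul])
    (fun w => by rw [← map_mul, hQL, map_smul]) τ
  refine ⟨C' * ‖ρ‖, by positivity, fun s t hs ht hst => ?_⟩
  rw [hts, hts, ← sub_apply]
  have h3 := h s t hs ht hst
  refine (ContinuousLinearMap.le_opNorm _ ρ).trans ?_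
  simp only [map_smul, map_add, map_sum, map_mul]
  calc _ ≤ (C' * s) * ‖ρ‖ := mul_le_mul_of_nonneg_right h3 (norm_nonneg _)
    _ = _ := by ring

end SecularHelpers

/-- Finite-dimensional secular averaging with a nearly degenerate
Hamiltonian: with `L_l ρ = −i [H₀ + l² δH, ρ]`, an arbitrary linear superoperator `Kop`, and
its secular part `Ksec = ∑_{ω ∈ F⁰} Π_ω ∘ Kop ∘ Π_ω`, the semigroups generated by
`L_l + l² Kop` and by `L_l + l² Ksec` become uniformly close on time intervals `0 ≤ l² t ≤ τ₁`
as `l → 0⁺`. Here the exponential of an endomorphism is given by its power series and the norm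
is the Frobenius norm. -/
theorem secular_averaging {n : ℕ} (hn : 0 < n)
    {K : Type*} [Fintype K] (ε : K → ℝ) (hε : Function.Injective ε)
    (P : K → Matrix (Fin n) (Fin n) ℂ)
    (hPherm : ∀ k : K, (P k)ᴴ = P k)
    (hPorth : ∀ k l : K, k ≠ l → P k * P l = 0)
    (hPidem : ∀ k : K, P k * P k = P k)
    (hPsum : ∑ k : K, P k = 1)
    (H₀ : Matrix (Fin n) (Fin n) ℂ) (hH₀ : H₀ = ∑ k : K, (ε k : ℂ) • P k)
    (δH : Matrix (Fin n) (Fin n) ℂ) (hδH : δH.IsHermitian)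
    (hcomm : H₀ * δH = δH * H₀)
    (Lop : ℝ → Module.End ℂ (Matrix (Fin n) (Fin n) ℂ))
    (hLop : ∀ (l : ℝ) (ρ : Matrix (Fin n) (Fin n) ℂ), Lop l ρ =
      (-Complex.I) • ((H₀ + ((l : ℂ) ^ 2) • δH) * ρ - ρ * (H₀ + ((l : ℂ) ^ 2) • δH)))
    (Kop : Module.End ℂ (Matrix (Fin n) (Fin n) ℂ))
    (Pin : ℝ → Module.End ℂ (Matrix (Fin n) (Fin n) ℂ))
    (hPin : ∀ (ω : ℝ) (X : Matrix (Fin n) (Fin n) ℂ), Pin ω X =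
      ∑ p ∈ Finset.univ.filter (fun p : K × K => ε p.1 - ε p.2 = ω),
        P p.2 * X * P p.1)
    (Ksec : Module.End ℂ (Matrix (Fin n) (Fin n) ℂ))
    (hKsec : Ksec = ∑ ω ∈ Finset.univ.image (fun p : K × K => ε p.1 - ε p.2),
      Pin ω * Kop * Pin ω) :
    ∀ ρ : Matrix (Fin n) (Fin n) ℂ, ∀ τ₁ : ℝ, 0 < τ₁ → ∀ η : ℝ, 0 < η →
      ∃ δ : ℝ, 0 < δ ∧ ∀ l : ℝ, 0 < l → l < δ → ∀ t : ℝ, 0 ≤ t → l ^ 2 * t ≤ τ₁ →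
        ‖(∑' k : ℕ, ((k.factorial : ℂ))⁻¹ •
              ((t • (Lop l + ((l : ℂ) ^ 2) • Kop)) ^ k) ρ) -
            (∑' k : ℕ, ((k.factorial : ℂ))⁻¹ •
              ((t • (Lop l + ((l : ℂ) ^ 2) • Ksec)) ^ k) ρ)‖ ≤ η := by
  classical
  intro ρ τ₁ hτ η hη
  set F := Finset.univ.image (fun p : K × K => ε p.1 - ε p.2) with hF
  obtain ⟨comm, hcomm'⟩ : ∃ comm : Matrix (Fin n) (Fin n) ℂ →
      Module.End ℂ (Matrix (Fin n) (Fin n) ℂ),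
      ∀ H X, comm H X = (-Complex.I) • (H * X - X * H) :=
    ⟨fun H => (-Complex.I) • (LinearMap.mulLeft ℂ H - LinearMap.mulRight ℂ H), fun H X => rfl⟩
  have hHP : ∀ k, H₀ * P k = (ε k : ℂ) • P k := by
    intro k
    rw [hH₀, Finset.sum_mul, Finset.sum_eq_single k]
    · rw [smul_mul_assoc, hPidem]
    · intro j _ hj
      rw [smul_mul_assoc, hPorth j k hj, smul_zero]
    · simp
  have hPH : ∀ k, P k * H₀ = (ε k : ℂ) • P k := by
    intro k
    rw [hH₀, Finset.mul_sum, Finset.sum_eq_single k]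
    · rw [mul_smul_comm, hPidem]
    · intro j _ hj
      rw [mul_smul_comm, hPorth k j hj.symm, smul_zero]
    · simp
  have hQ1 : ∑ w ∈ F, Pin w = 1 := by
    ext1 X
    rw [LinearMap.sum_apply]
    simp_rw [hPin]
    rw [hF, Finset.sum_fiberwise_of_maps_to (fun p _ => Finset.mem_image_of_mem _ (Finset.mem_univ p)),
      Fintype.sum_prod_type]
    simp_rw [← Finset.sum_mul, ← Finset.mul_sum]
    simp_rw [hPsum, one_mul, mul_one]
    rfl
  have hLQ : ∀ w, comm H₀ * Pin w = (Complex.I * w) • Pin w := by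
    intro w
    ext1 X
    rw [Module.End.mul_apply, LinearMap.smul_apply, hPin, map_sum, Finset.smul_sum]
    refine Finset.sum_congr rfl fun p hp => ?_
    have hw : ε p.1 - ε p.2 = w := (Finset.mem_filter.1 hp).2
    rw [hcomm', ← mul_assoc, ← mul_assoc, hHP, mul_assoc _ _ H₀, hPH, smul_mul_assoc,
      smul_mul_assoc, mul_smul_comm, ← sub_smul, smul_smul, ← hw]
    congr 1
    push_cast; ring
  have hQL : ∀ w, Pin w * comm H₀ = (Complex.I * w) • Pin w := by
    intro w
    ext1 X
    rw [Module.End.mul_apply, LinearMap.smul_apply, hPin, hPin, Finset.smul_sum]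
    refine Finset.sum_congr rfl fun p hp => ?_
    have hw : ε p.1 - ε p.2 = w := (Finset.mem_filter.1 hp).2
    rw [hcomm', mul_smul_comm, smul_mul_assoc, mul_sub, sub_mul, ← mul_assoc, hPH,
      ← mul_assoc, mul_assoc _ H₀, hHP, smul_mul_assoc,
      smul_mul_assoc, mul_smul_comm, ← sub_smul, smul_smul, ← hw]
    congr 1
    push_cast; ring
  have hL : ∀ l : ℝ, Lop l = comm H₀ + ((l : ℂ) ^ 2) • comm δH := by
    intro l
    ext1 X
    rw [hLop, LinearMap.add_apply, LinearMap.smul_apply, hcomm', hcomm', smul_comm, ← smul_add]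
    congr 1
    rw [add_mul, mul_add, smul_mul_assoc, mul_smul_comm, smul_sub]
    abel
  obtain ⟨C', h0, h⟩ := secular_avg_end F Pin (comm H₀) (comm δH) Kop hQ1 hLQ hQL ρ τ₁
  refine ⟨min 1 (η / (C' + 1)), by positivity, fun l hl hlδ t ht hlt => ?_⟩
  have h3 := h (l ^ 2) t (sq_nonneg l) ht hlt
  have hl1 : l < 1 := hlδ.trans_le (min_le_left _ _)
  have hl2 : l < η / (C' + 1) := hlδ.trans_le (min_le_right _ _)
  have hfin : C' * l ^ 2 ≤ η := by
    rw [lt_div_iff₀ (by positivity)] at hl2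
    nlinarith [mul_nonneg h0 hl.le]
  have eq : ∀ M : Module.End ℂ (Matrix (Fin n) (Fin n) ℂ),
      t • (Lop l + ((l : ℂ) ^ 2) • M) =
        (t : ℂ) • (comm H₀ + ((l ^ 2 : ℝ) : ℂ) • (comm δH + M)) := by
    intro M
    rw [hL, smul_add _ (comm δH), ← add_assoc, Complex.ofReal_pow]
    rfl
  rw [eq, eq, hKsec]
  exact h3.trans hfin
end
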